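/- arXiv:2303.06864 — 13 statements merged into one kernel-verified Lean document; each statement's English description precedes it below -/
import Mathlib

section
/- Let G be a finite connected simple graph with at least one vertex in which every two vertices are at distance at most 2 (diameter at most 2). Then χ_ssc(G) equals the domination number γ(G) of G. -/
open SimpleGraph

/-- The closed neighbourhood of `v` in `G`. -/
def closedNbhd {V : Type*} (G : SimpleGraph V) (v : V) : Set V :=
  {u | u = v ∨ G.Adj v u}

/-- `c` is a `q`-subset square colouring of `G`: colours `1, …, q` are real colours and
colour `0` means "uncoloured"; every closed neighbourhood contains a coloured vertex, and
no nonzero colour appears on two distinct vertices of a closed neighbourhood. -/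
def IsSubsetSquareColouring {V : Type*} (G : SimpleGraph V) (q : ℕ) (c : V → ℕ) : Prop :=
  (∀ v, c v ≤ q) ∧
  (∀ v, ∃ u ∈ closedNbhd G v, c u ≠ 0) ∧
  (∀ v i, 1 ≤ i → i ≤ q →
    ∀ u ∈ closedNbhd G v, ∀ w ∈ closedNbhd G v, c u = i → c w = i → u = w)

/-- The subset square chromatic number `χ_ssc G`. -/
noncomputable def sscNum {V : Type*} (G : SimpleGraph V) : ℕ :=
  sInf {q | ∃ c : V → ℕ, IsSubsetSquareColouring G q c}

/-- `D` is a dominating set of `G`. -/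
def IsDominatingSet {V : Type*} (G : SimpleGraph V) (D : Set V) : Prop :=
  ∀ v, ∃ u ∈ D, u ∈ closedNbhd G v

/-- The domination number `γ G`. -/
noncomputable def dominationNumber {V : Type*} [Fintype V] (G : SimpleGraph V) : ℕ :=
  sInf {k | ∃ D : Finset V, D.card = k ∧ IsDominatingSet G ↑D}

lemma ssc_aux {V : Type*} (G : SimpleGraph V)
    (hconn : G.Connected) (hdiam : ∀ u v : V, G.dist u v ≤ 2) (u w : V) :
    ∃ v, u ∈ closedNbhd G v ∧ w ∈ closedNbhd G v := by
  obtain ⟨p, hp⟩ := hconn.exists_walk_length_eq_dist u w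
  have h2 := hdiam u w
  rw [← hp] at h2
  match p, h2 with
  | .nil, _ => exact ⟨u, Or.inl rfl, Or.inl rfl⟩
  | .cons h .nil, _ => exact ⟨u, Or.inl rfl, Or.inr h⟩
  | .cons (v := v) h (.cons h' .nil), _ => exact ⟨v, Or.inr h.symm, Or.inr h'⟩
  | .cons _ (.cons _ (.cons _ p)), h2 =>
    simp only [Walk.length_cons] at h2
    omega

theorem stmt1 {V : Type*} [Fintype V] [Nonempty V] (G : SimpleGraph V)
    (hconn : G.Connected) (hdiam : ∀ u v : V, G.dist u v ≤ 2) :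
    sscNum G = dominationNumber G := by
  classical
  have key : ∀ D : Finset V, IsDominatingSet G (↑D : Set V) →
      ∃ c : V → ℕ, IsSubsetSquareColouring G D.card c := by
    intro D hD
    refine ⟨fun v => if h : v ∈ D then (D.equivFin ⟨v, h⟩ : ℕ) + 1 else 0, ?_, ?_, ?_⟩
    · intro v
      by_cases h : v ∈ D
      · simp only [h, dif_pos]
        exact (D.equivFin ⟨v, h⟩).2
      · simp [h]
    · intro v
      obtain ⟨u, hu, huv⟩ := hD v
      have hu' : u ∈ D := hu
      exact ⟨u, huv, by simp [hu']⟩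
    · intro v i hi _ u _ w _ hu hw
      by_cases h : u ∈ D
      · by_cases h' : w ∈ D
        · simp only [h, h', dif_pos] at hu hw
          have : D.equivFin ⟨u, h⟩ = D.equivFin ⟨w, h'⟩ := Fin.ext (by omega)
          have := D.equivFin.injective this
          exact congrArg Subtype.val this
        · simp only [h', dif_neg, not_false_eq_true] at hw
          omega
      · simp only [h, dif_neg, not_false_eq_true] at hu
        omega
  have hdom : {k | ∃ D : Finset V, D.card = k ∧ IsDominatingSet G (↑D : Set V)}.Nonempty :=
    ⟨_, Finset.univ, rfl, fun v => ⟨v, by simp, Or.inl rfl⟩⟩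
  obtain ⟨D, hDc, hD⟩ := Nat.sInf_mem hdom
  apply le_antisymm
  · unfold dominationNumber
    rw [← hDc]
    exact Nat.sInf_le (key D hD)
  · have hne : {q | ∃ c : V → ℕ, IsSubsetSquareColouring G q c}.Nonempty := ⟨_, key D hD⟩
    obtain ⟨c, h1, h2, h3⟩ := Nat.sInf_mem hne
    change ∀ v, c v ≤ sscNum G at h1
    have hle : (Finset.univ.filter (fun v => c v ≠ 0)).card ≤ (Finset.Icc 1 (sscNum G)).card := by
      apply Finset.card_le_card_of_injOn c
      · intro v hv
        have hv' : c v ≠ 0 := by simpa using hv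
        have := h1 v
        simp only [Finset.coe_Icc, Set.mem_Icc]
        omega
      · intro u hu w hw huw
        have hu' : c u ≠ 0 := by simpa using hu
        obtain ⟨v, hv, hv'⟩ := ssc_aux G hconn hdiam u w
        exact h3 v (c u) (by omega) (h1 u) u hv w hv' rfl huw.symm
    rw [Nat.card_Icc] at hle
    refine le_trans (Nat.sInf_le ⟨_, rfl, ?_⟩) (hle.trans (by omega))
    intro v
    obtain ⟨u, hu, hc⟩ := h2 v
    exact ⟨u, by simpa using hc, hu⟩
end

section
/- Let G be a finite simple graph and let X be a nonempty vertex cover of G. Then χ_ssc(G) ≤ |X|; that is, the number of colours required to subset square colour G is at most the size of a vertex cover of G. -/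
open SimpleGraph

theorem stmt2 {V : Type*} [Fintype V] (G : SimpleGraph V) (X : Finset V)
    (hne : X.Nonempty) (hvc : ∀ u v : V, G.Adj u v → u ∈ X ∨ v ∈ X) :
    sscNum G ≤ X.card := by
  classical
  apply Nat.sInf_le
  let e := X.equivFin
  let c : V → ℕ := fun v => if h : v ∈ X then (e ⟨v, h⟩ : ℕ) + 1
    else if ∃ u, G.Adj v u then 0 else 1
  have hcX : ∀ v (h : v ∈ X), c v = (e ⟨v, h⟩ : ℕ) + 1 := fun v h => by simp [c, h]
  have hc1 : ∀ v, v ∉ X → (∃ u, G.Adj v u) → c v = 0 := fun v h h' => by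
    simp only [c, h, dite_false, if_pos h']
  have hc2 : ∀ v, v ∉ X → (¬ ∃ u, G.Adj v u) → c v = 1 := fun v h h' => by
    simp only [c, h, dite_false, if_neg h']
  have hpos : 1 ≤ X.card := hne.card_pos
  have key : ∀ v, c v ≠ 0 → v ∈ X ∨ ¬ ∃ u, G.Adj v u := by
    intro v hv
    by_contra hcon
    push Not at hcon
    exact hv (hc1 v hcon.1 hcon.2)
  refine ⟨c, ?_, ?_, ?_⟩
  · intro v
    by_cases h : v ∈ X
    · rw [hcX v h]
      exact (e ⟨v, h⟩).2
    · by_cases h' : ∃ u, G.Adj v u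
      · rw [hc1 v h h']; omega
      · rw [hc2 v h h']; exact hpos
  · intro v
    by_cases h : v ∈ X
    · exact ⟨v, Or.inl rfl, by rw [hcX v h]; omega⟩
    · by_cases h' : ∃ u, G.Adj v u
      · obtain ⟨u, hu⟩ := h'
        have hX : u ∈ X := (hvc v u hu).resolve_left h
        exact ⟨u, Or.inr hu, by rw [hcX u hX]; omega⟩
      · exact ⟨v, Or.inl rfl, by rw [hc2 v h h']; omega⟩
  · intro v i hi _ u hu w hw hcu hcw
    have isoeq : ∀ a b, a ∈ closedNbhd G v → b ∈ closedNbhd G v →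
        (¬ ∃ x, G.Adj a x) → a = b := by
      intro a b ha hb hiso
      rcases ha with rfl | ha
      · rcases hb with hb | hb
        · exact hb.symm
        · exact absurd ⟨b, hb⟩ hiso
      · exact absurd ⟨v, ha.symm⟩ hiso
    rcases key u (by omega) with hu' | hu'
    · rcases key w (by omega) with hw' | hw'
      · rw [hcX u hu'] at hcu
        rw [hcX w hw'] at hcw
        have h3 : e ⟨u, hu'⟩ = e ⟨w, hw'⟩ := Fin.ext (by omega)
        exact congrArg Subtype.val (e.injective h3)
      · exact (isoeq w u hw hu hw').symm
    · exact isoeq u w hu hw hu'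
end

section
/- Let G be a finite simple graph and let X be a nonempty twin cover of G, i.e. a set of vertices such that for every edge uv of G, either u ∈ X or v ∈ X, or u and v are true twins. Then χ_ssc(G) ≤ |X|. -/
open SimpleGraph

theorem stmt3 {V : Type*} [Fintype V] (G : SimpleGraph V) (X : Finset V)
    (hne : X.Nonempty)
    (htc : ∀ u v : V, G.Adj u v →
      u ∈ X ∨ v ∈ X ∨ closedNbhd G u = closedNbhd G v) :
    sscNum G ≤ X.card := by
  classical
  have hpos : 0 < X.card := hne.card_pos
  have hself : ∀ v, v ∈ closedNbhd G v := fun v => Or.inl rfl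
  have hsymm : ∀ u v, u ∈ closedNbhd G v → v ∈ closedNbhd G u := by
    rintro u v (h | h)
    · exact Or.inl h.symm
    · exact Or.inr h.symm
  let D : V → Prop := fun v => ∀ x ∈ closedNbhd G v, x ∉ X
  have hD : ∀ v, D v → ∀ u ∈ closedNbhd G v, closedNbhd G u = closedNbhd G v := by
    intro v hv u hu
    rcases hu with h | h
    · rw [h]
    · rcases htc v u h with h1 | h1 | h1
      · exact absurd h1 (hv v (hself v))
      · exact absurd h1 (hv u (Or.inr h))
      · exact h1.symm
  have hD2 : ∀ v, D v → ∀ u ∈ closedNbhd G v, D u := by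
    intro v hv u hu x hx
    rw [hD v hv u hu] at hx
    exact hv x hx
  have hr : ∀ S : Set V, ∃ r : V, S.Nonempty → r ∈ S := by
    intro S
    by_cases hS : S.Nonempty
    · exact ⟨hS.choose, fun _ => hS.choose_spec⟩
    · exact ⟨hne.choose, fun h => absurd h hS⟩
  choose r hr using hr
  let c : V → ℕ := fun v => if h : v ∈ X then (X.equivFin ⟨v, h⟩ : ℕ) + 1
    else if D v ∧ r (closedNbhd G v) = v then 1 else 0
  have hcX : ∀ v (h : v ∈ X), c v = (X.equivFin ⟨v, h⟩ : ℕ) + 1 := by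
    intro v h
    simp only [c, dif_pos h]
  have hcN : ∀ v, v ∉ X → c v = if D v ∧ r (closedNbhd G v) = v then 1 else 0 := by
    intro v h
    simp only [c, dif_neg h]
  have hcN' : ∀ v, v ∉ X → c v ≠ 0 → D v ∧ r (closedNbhd G v) = v := by
    intro v h h0
    rw [hcN v h] at h0
    by_contra h1
    exact h0 (if_neg h1)
  refine Nat.sInf_le ⟨c, ?_, ?_, ?_⟩
  · intro v
    by_cases h : v ∈ X
    · rw [hcX v h]
      exact (X.equivFin ⟨v, h⟩).2
    · rw [hcN v h]
      split_ifs <;> omega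
  · intro v
    by_cases hv : D v
    · have hm := hr (closedNbhd G v) ⟨v, hself v⟩
      refine ⟨r (closedNbhd G v), hm, ?_⟩
      rw [hcN _ (hv _ hm), if_pos ⟨hD2 v hv _ hm, by rw [hD v hv _ hm]⟩]
      exact one_ne_zero
    · simp only [D, not_forall, not_not] at hv
      obtain ⟨x, hx, hxX⟩ := hv
      refine ⟨x, hx, ?_⟩
      rw [hcX x hxX]
      omega
  · intro v i hi _ u hu w hw hcu hcw
    by_cases hv : D v
    · have h1 := (hcN' u (hv u hu) (by omega)).2
      have h2 := (hcN' w (hv w hw) (by omega)).2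
      rw [hD v hv u hu] at h1
      rw [hD v hv w hw] at h2
      exact h1.symm.trans h2
    · have key : ∀ z ∈ closedNbhd G v, c z = i → z ∈ X := by
        intro z hz hcz
        by_contra hzX
        exact hv (hD2 z (hcN' z hzX (by omega)).1 v (hsymm z v hz))
      have huX := key u hu hcu
      have hwX := key w hw hcw
      rw [hcX u huX] at hcu
      rw [hcX w hwX] at hcw
      have := X.equivFin.injective (Fin.ext (by omega : (X.equivFin ⟨u, huX⟩ : ℕ) = X.equivFin ⟨w, hwX⟩))
      exact congrArg Subtype.val this
end

section
/- Let G be a finite simple graph whose vertex set can be partitioned into t nonempty classes V_1, …, V_t such that any two vertices u, v lying in the same class satisfy N(u) \ {v} = N(v) \ {u} (i.e. they have the same type). Then χ_ssc(G) ≤ t; in other words, the number of colours required to subset square colour G is at most its neighbourhood diversity. -/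
open SimpleGraph

theorem stmt4 {V : Type*} [Fintype V] (G : SimpleGraph V) (t : ℕ)
    (f : V → Fin t) (hsurj : Function.Surjective f)
    (htype : ∀ u v : V, f u = f v →
      G.neighborSet u \ {v} = G.neighborSet v \ {u}) :
    sscNum G ≤ t := by
  classical
  choose r hr using hsurj
  have key : ∀ v i, (∀ x, ¬ G.Adj i x) → i ∈ closedNbhd G v → ∀ w ∈ closedNbhd G v, w = i := by
    intro v i hi hiv w hw
    rcases hiv with h | h
    · subst h
      rcases hw with h | h
      · exact h
      · exact absurd h (hi w)
    · exact absurd h.symm (hi v)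
  apply Nat.sInf_le
  refine ⟨fun v => if v = r (f v) ∨ (∀ x, ¬ G.Adj v x) then (f v : ℕ) + 1 else 0, ?_, ?_, ?_⟩
  · intro v
    have := (f v).isLt
    dsimp only
    split_ifs <;> omega
  · intro v
    by_cases hv : v = r (f v) ∨ (∀ x, ¬ G.Adj v x)
    · exact ⟨v, Or.inl rfl, by simp only [if_pos hv]; omega⟩
    · rw [not_or] at hv
      obtain ⟨h1, h2⟩ := hv
      push Not at h2
      obtain ⟨w, hw⟩ := h2
      refine ⟨r (f w), ?_, ?_⟩
      · have ht := htype w (r (f w)) (hr _).symm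
        by_cases hvr : v = r (f w)
        · exact Or.inl hvr.symm
        · have hm : v ∈ G.neighborSet w \ {r (f w)} := ⟨hw.symm, hvr⟩
          rw [ht] at hm
          exact Or.inr (G.adj_symm hm.1)
      · have : r (f w) = r (f (r (f w))) := by rw [hr]
        simp only [if_pos (Or.inl this : r (f w) = r (f (r (f w))) ∨ _)]
        omega
  · intro v i hi _ u hu w hw hcu hcw
    dsimp only at hcu hcw
    split_ifs at hcu with h1
    · split_ifs at hcw with h2
      · have hf : f u = f w := Fin.ext (by omega)
        rcases h1 with h1 | h1
        · rcases h2 with h2 | h2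
          · rw [h1, h2, hf]
          · exact key v w h2 hw u hu
        · exact (key v u h1 hu w hw).symm
      · omega
    · omega
end

section
/- Let G be a finite simple graph and let X ⊆ V(G) be a cluster vertex deletion set, i.e. a set of vertices such that the subgraph of G induced on V(G) \ X is a disjoint union of complete graphs. Then χ_ssc(G) ≤ |X| + 1. -/
open SimpleGraph

theorem stmt5 {V : Type*} [Fintype V] (G : SimpleGraph V) (X : Finset V)
    (hcluster : ∀ u v w : V, u ∉ X → v ∉ X → w ∉ X →
      G.Adj u v → G.Adj v w → u ≠ w → G.Adj u w) :
    sscNum G ≤ X.card + 1 := by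
  classical
  let P : V → Prop := fun v => v ∉ X ∧ ∀ x ∈ X, ¬ G.Adj v x
  let S : Setoid V :=
    { r := fun u v => u = v ∨ (P u ∧ P v ∧ G.Adj u v)
      iseqv :=
        { refl := fun u => Or.inl rfl
          symm := by
            rintro u v (h | ⟨h1, h2, h3⟩)
            · exact Or.inl h.symm
            · exact Or.inr ⟨h2, h1, h3.symm⟩
          trans := by
            rintro u v w (rfl | ⟨h1, h2, h3⟩) (rfl | ⟨h4, h5, h6⟩)
            · exact Or.inl rfl
            · exact Or.inr ⟨h4, h5, h6⟩
            · exact Or.inr ⟨h1, h2, h3⟩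
            · by_cases huw : u = w
              · exact Or.inl huw
              · exact Or.inr ⟨h1, h5, hcluster u v w h1.1 h2.1 h5.1 h3 h6 huw⟩ } }
  let rep : V → V := fun v => (Quotient.mk S v).out
  have hrep : ∀ v, rep v = v ∨ (P (rep v) ∧ P v ∧ G.Adj (rep v) v) := fun v =>
    Quotient.exact (s := S) (Quotient.out_eq (Quotient.mk S v))
  have hrepeq : ∀ u v, P u → P v → G.Adj u v → rep u = rep v := fun u v hu hv h =>
    congrArg Quotient.out (Quotient.sound (s := S) (Or.inr ⟨hu, hv, h⟩))
  have hreprep : ∀ v, rep (rep v) = rep v := fun v =>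
    congrArg Quotient.out (Quotient.out_eq (Quotient.mk S v))
  clear_value rep
  let c : V → ℕ := fun v =>
    if h : v ∈ X then (X.equivFin ⟨v, h⟩ : ℕ) + 1
    else if P v ∧ rep v = v then X.card + 1 else 0
  have cX : ∀ v (h : v ∈ X), c v = (X.equivFin ⟨v, h⟩ : ℕ) + 1 := fun v h => dif_pos h
  have cXle : ∀ v, v ∈ X → 1 ≤ c v ∧ c v ≤ X.card := fun v h => by
    rw [cX v h]
    have := (X.equivFin ⟨v, h⟩).2
    omega
  have cR : ∀ v, P v → rep v = v → c v = X.card + 1 := fun v h h' => by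
    simp only [c]
    rw [dif_neg h.1, if_pos ⟨h, h'⟩]
  have cN : ∀ v, v ∉ X → ¬ (P v ∧ rep v = v) → c v = 0 := fun v h h' => by
    simp only [c]
    rw [dif_neg h, if_neg h']
  have cinj : ∀ u v, u ∈ X → v ∈ X → c u = c v → u = v := fun u v hu hv h => by
    rw [cX u hu, cX v hv] at h
    have := X.equivFin.injective (Fin.ext (Nat.succ_injective h))
    simpa using this
  clear_value c
  apply Nat.sInf_le
  refine ⟨c, ?_, ?_, ?_⟩
  · intro v
    by_cases h : v ∈ X
    · have := cXle v h
      omega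
    · by_cases h' : P v ∧ rep v = v
      · exact (cR v h'.1 h'.2).le
      · rw [cN v h h']
        omega
  · intro v
    by_cases h : v ∈ X
    · exact ⟨v, Or.inl rfl, by have := cXle v h; omega⟩
    by_cases hP : P v
    · rcases hrep v with h1 | ⟨h1, -, h2⟩
      · exact ⟨v, Or.inl rfl, by rw [cR v hP h1]; omega⟩
      · exact ⟨rep v, Or.inr h2.symm, by rw [cR _ h1 (hreprep v)]; omega⟩
    · have : ∃ x ∈ X, G.Adj v x := by
        by_contra hc
        exact hP ⟨h, fun x hx ha => hc ⟨x, hx, ha⟩⟩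
      obtain ⟨x, hx, ha⟩ := this
      exact ⟨x, Or.inr ha, by have := cXle x hx; omega⟩
  · intro v i hi _ u hu w hw hcu hcw
    have key : ∀ y, c y = i → y ∈ X ∨ (P y ∧ rep y = y) := fun y hy => by
      by_contra hc
      have := cN y (fun h => hc (Or.inl h)) (fun h => hc (Or.inr h))
      omega
    rcases key u hcu with h1 | ⟨h1, h1'⟩ <;> rcases key w hcw with h2 | ⟨h2, h2'⟩
    · exact cinj u w h1 h2 (hcu.trans hcw.symm)
    · have := cXle u h1
      have := cR w h2 h2'
      omega
    · have := cXle w h2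
      have := cR u h1 h1'
      omega
    · by_contra hne
      have hadj : G.Adj u w := by
        rcases hu with rfl | hu
        · rcases hw with rfl | hw
          · exact absurd rfl hne
          · exact hw
        · rcases hw with rfl | hw
          · exact hu.symm
          · exact hcluster u v w h1.1 (fun hv => h1.2 v hv hu.symm) h2.1 hu.symm hw hne
      exact hne (h1'.symm.trans ((hrepeq u w h1 h2 hadj).trans h2'))
end

section
/- Let T be a finite tree (a connected acyclic simple graph) with at least one edge, and let Δ ≥ 1 be its maximum degree. Then Δ colours suffice to subset square colour T, i.e. χ_ssc(T) ≤ Δ. -/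
open SimpleGraph

universe u in
theorem injCol (D : ℕ) (hD : 1 ≤ D) (n : ℕ) : ∀ (V : Type u) [Finite V] (G : SimpleGraph V),
    Nat.card V = n → G.IsTree → (∀ v, (G.neighborSet v).ncard ≤ D) →
    ∃ f : V → ℕ, (∀ v, 1 ≤ f v ∧ f v ≤ D) ∧
      ∀ v a b, G.Adj v a → G.Adj v b → f a = f b → a = b := by
  classical
  induction n with
  | zero =>
    intro V _ G hn hT hd
    have := hT.connected.nonempty
    have := Nat.card_pos (α := V)
    omega
  | succ n ih =>
    intro V _ G hn hT hd
    rcases subsingleton_or_nontrivial V with hs | hs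
    · exact ⟨fun _ => 1, fun _ => ⟨le_rfl, hD⟩, fun _ a b _ _ _ => Subsingleton.elim a b⟩
    have := Fintype.ofFinite V
    obtain ⟨x, hx⟩ := hT.exists_vert_degree_one_of_nontrivial
    have hT' : (G.induce {x}ᶜ).IsTree :=
      ⟨hT.connected.induce_compl_singleton_of_degree_eq_one hx, hT.isAcyclic.induce _⟩
    obtain ⟨u, hxu, hu⟩ := degree_eq_one_iff_existsUnique_adj.mp hx
    have hc : Nat.card ({x}ᶜ : Set V) = n := by
      have h1 := Set.ncard_add_ncard_compl ({x} : Set V)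
      rw [Set.ncard_singleton] at h1
      rw [Nat.card_coe_set_eq]
      omega
    have hd' : ∀ v, ((G.induce {x}ᶜ).neighborSet v).ncard ≤ D := by
      intro v
      refine le_trans ?_ (hd v)
      rw [← Set.ncard_image_of_injective _ Subtype.val_injective]
      apply Set.ncard_le_ncard _ (Set.toFinite _)
      rintro _ ⟨w, hw, rfl⟩
      simpa using hw
    obtain ⟨g, hg1, hg2⟩ := ih _ (G.induce {x}ᶜ) hc hT' hd'
    let g' : V → ℕ := fun v => if h : v ≠ x then g ⟨v, h⟩ else 0
    have hg' : ∀ v (h : v ≠ x), g' v = g ⟨v, h⟩ := fun v h => by simp [g', h]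
    have hlt : (g' '' (G.neighborSet u \ {x})).ncard < (Set.Icc 1 D).ncard := by
      have h1 := Set.ncard_image_le (f := g') (Set.toFinite (G.neighborSet u \ {x}))
      have h2 := Set.ncard_sdiff_singleton_add_one (s := G.neighborSet u) (a := x)
        hxu.symm (Set.toFinite _)
      have h3 := hd u
      have h4 : (Set.Icc 1 D).ncard = D := by simp [Set.ncard_eq_toFinset_card']
      omega
    obtain ⟨k, hk, hk'⟩ := Set.exists_mem_notMem_of_ncard_lt_ncard hlt (Set.toFinite _)
    have key : ∀ v b, b ≠ x → G.Adj v x → G.Adj v b → k ≠ g' b := by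
      intro v b hb h1 h2 h3
      have : v = u := hu _ h1.symm
      subst this
      exact hk' ⟨b, ⟨h2, hb⟩, h3.symm⟩
    refine ⟨fun v => if v = x then k else g' v, fun v => ?_, fun v a b ha hb hab => ?_⟩
    · by_cases h : v = x
      · simpa [h] using hk
      · simpa [h, hg'] using hg1 _
    · by_cases h1 : a = x <;> by_cases h2 : b = x
      · rw [h1, h2]
      · subst h1
        exact absurd (by simpa [h2] using hab) (key v b h2 ha hb)
      · subst h2
        exact absurd (by simpa [h1] using hab.symm) (key v a h1 hb ha)
      · by_cases hv : v = x
        · subst hv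
          rw [hu a ha, hu b hb]
        · simp only [h1, h2, if_false, hg' a h1, hg' b h2] at hab
          have := hg2 ⟨v, hv⟩ ⟨a, h1⟩ ⟨b, h2⟩ (by simpa using ha) (by simpa using hb) hab
          exact congrArg Subtype.val this

theorem stmt6 {V : Type*} [Fintype V] (G : SimpleGraph V) [DecidableRel G.Adj]
    (hconn : G.Connected) (hacyc : G.IsAcyclic) (hedge : ∃ u v : V, G.Adj u v)
    (Δ : ℕ) (hΔ : Δ = G.maxDegree) (h1 : 1 ≤ Δ) :
    sscNum G ≤ Δ := by
  classical
  subst hΔ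
  obtain ⟨p, q, hpq⟩ := hedge
  have : Nontrivial V := ⟨p, q, hpq.ne⟩
  obtain ⟨f, hf1, hf2⟩ := injCol G.maxDegree h1 _ V G rfl ⟨hconn, hacyc⟩ (fun v => by
    have := G.degree_le_maxDegree v
    rwa [← G.card_neighborSet_eq_degree, ← Nat.card_eq_fintype_card, Nat.card_coe_set_eq] at this)
  let C := hacyc.coloringTwo
  apply Nat.sInf_le
  refine ⟨fun v => if C v = 0 then f v else 0, fun v => ?_, fun v => ?_, ?_⟩
  · dsimp only
    split_ifs
    · exact (hf1 v).2
    · omega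
  · by_cases h : C v = 0
    · exact ⟨v, Or.inl rfl, by have := (hf1 v).1; simp only [h, if_true]; omega⟩
    · obtain ⟨w, hw⟩ := hconn.preconnected.exists_adj_of_nontrivial v
      have hne := C.valid hw
      have h0 : C w = 0 := by omega
      exact ⟨w, Or.inr hw, by have := (hf1 w).1; simp only [h0, if_true]; omega⟩
  · intro v i hi _ a ha b hb hca hcb
    dsimp only at hca hcb
    split_ifs at hca with hA
    · split_ifs at hcb with hB
      · rcases ha with rfl | ha <;> rcases hb with rfl | hb
        · rfl
        · exact absurd (hA.trans hB.symm) (C.valid hb)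
        · exact absurd (hB.trans hA.symm) (C.valid ha)
        · exact hf2 v a b ha hb (hca.trans hcb.symm)
      · omega
    · omega
end

section
/- For every integer d ≥ 2, let T_d be the rooted tree of height 2 in which the root has exactly d children and each child of the root has exactly d children (so T_d is a tree on 1 + d + d² vertices with maximum degree d + 1). Then χ_ssc(T_d) ≥ d; that is, Δ − 1 colours are sometimes necessary to subset square colour a tree of maximum degree Δ. -/
open SimpleGraph

/-- The rooted tree of height 2 in which the root has `d` children and every child of
the root has `d` children. -/
def heightTwoTree (d : ℕ) : SimpleGraph (Unit ⊕ Fin d ⊕ Fin d × Fin d) :=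
  SimpleGraph.fromRel (fun x y =>
    (∃ i : Fin d, x = Sum.inl () ∧ y = Sum.inr (Sum.inl i)) ∨
    (∃ i j : Fin d, x = Sum.inr (Sum.inl i) ∧ y = Sum.inr (Sum.inr (i, j))))

theorem ssc_aux_s7 {V : Type*} {G : SimpleGraph V} {q d : ℕ} {c : V → ℕ}
    (hc : IsSubsetSquareColouring G q c) (v : V) (f : Fin d → V) (hf : Function.Injective f)
    (hm : ∀ j, f j ∈ closedNbhd G v) (h0 : ∀ j, c (f j) ≠ 0) : d ≤ q := by
  have h := Finset.card_le_card_of_injOn (s := (Finset.univ : Finset (Fin d)))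
    (t := Finset.Icc 1 q) (fun j => c (f j))
    (fun j _ => by
      have := hc.1 (f j)
      have := h0 j
      simp only [Finset.coe_Icc, Set.mem_Icc]
      omega)
    (fun a _ b _ hab => hf (hc.2.2 v (c (f a)) (Nat.one_le_iff_ne_zero.2 (h0 a)) (hc.1 _)
      _ (hm a) _ (hm b) rfl hab.symm))
  simpa using h

theorem stmt7 (d : ℕ) (hd : 2 ≤ d) : d ≤ sscNum (heightTwoTree d) := by
  unfold sscNum
  apply le_csInf
  · let e := Fintype.equivFin (Unit ⊕ Fin d ⊕ Fin d × Fin d)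
    refine ⟨Fintype.card (Unit ⊕ Fin d ⊕ Fin d × Fin d), fun v => (e v).val + 1,
      fun v => (e v).isLt, fun v => ⟨v, Or.inl rfl, Nat.succ_ne_zero _⟩, ?_⟩
    intro v i _ _ u _ w _ hu hw
    apply e.injective
    apply Fin.ext
    have hu' : (e u).val + 1 = i := hu
    have hw' : (e w).val + 1 = i := hw
    omega
  · rintro q ⟨c, hc⟩
    by_cases h : ∃ i : Fin d, c (Sum.inr (Sum.inl i)) = 0
    · obtain ⟨i, hi⟩ := h
      refine ssc_aux_s7 hc (Sum.inr (Sum.inl i)) (fun j => Sum.inr (Sum.inr (i, j))) ?_ ?_ ?_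
      · intro a b hab
        simpa using hab
      · intro j
        right
        simp [heightTwoTree]
      · intro j
        obtain ⟨u, hu, hu0⟩ := hc.2.1 (Sum.inr (Sum.inr (i, j)))
        rcases hu with rfl | hu
        · exact hu0
        · simp [heightTwoTree] at hu
          simp_all
    · push Not at h
      refine ssc_aux_s7 hc (Sum.inl ()) (fun j => Sum.inr (Sum.inl j)) ?_ ?_ h
      · intro a b hab
        simpa using hab
      · intro j
        right
        simp [heightTwoTree]
end

section
/- Let G be a finite connected bipartite simple graph with bipartition V(G) = A ⊎ B, where A and B are both nonempty, and suppose G admits a strong ordering, i.e. linear orders on A and on B such that for all a, a' ∈ A and b, b' ∈ B with a < a' and b < b', if (a, b') and (a', b) are edges of G then (a, b) and (a', b') are also edges of G. Then χ_ssc(G) ≤ 4. -/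
open SimpleGraph

open Classical in
lemma half_col {V : Type*} [Fintype V] (G : SimpleGraph V)
    (A B : Set V) (fA fB : V → ℕ) (hfA : Set.InjOn fA A) (hfB : Set.InjOn fB B)
    (hdom : ∀ b ∈ B, ∃ a ∈ A, G.Adj a b)
    (hstrong : ∀ a ∈ A, ∀ a' ∈ A, ∀ b ∈ B, ∀ b' ∈ B,
      fA a < fA a' → fB b < fB b' → G.Adj a b' → G.Adj a' b →
      G.Adj a b ∧ G.Adj a' b') :
    ∃ c : V → ℕ, (∀ v, c v ≤ 2) ∧ (∀ v, c v ≠ 0 → v ∈ A) ∧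
      (∀ b ∈ B, ∃ a ∈ A, G.Adj a b ∧ c a ≠ 0) ∧
      (∀ b ∈ B, ∀ u w, G.Adj u b → G.Adj w b → c u ≠ 0 → c u = c w → u = w) := by
  let P : Finset V → Prop := fun S => (∀ s ∈ S, s ∈ A) ∧ ∀ b ∈ B, ∃ a ∈ S, G.Adj a b
  obtain ⟨S, hS, hmin⟩ := Finset.exists_min_image (Finset.univ.filter P) Finset.card
    ⟨Finset.univ.filter (· ∈ A), by
      simp only [Finset.mem_filter, Finset.mem_univ, true_and, P]
      exact ⟨fun s h => h, hdom⟩⟩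
  simp only [Finset.mem_filter, Finset.mem_univ, true_and] at hS hmin
  obtain ⟨hSA, hSd⟩ := hS
  have hpriv : ∀ s ∈ S, ∃ b ∈ B, G.Adj s b ∧ ∀ t ∈ S, G.Adj t b → t = s := by
    intro s hs
    by_contra hcon
    push Not at hcon
    have hP : P (S.erase s) := by
      refine ⟨fun t ht => hSA t (Finset.mem_of_mem_erase ht), fun b hb => ?_⟩
      obtain ⟨a, ha, hab⟩ := hSd b hb
      by_cases h : a = s
      · subst h
        obtain ⟨t, ht, htb, hne⟩ := hcon b hb hab
        exact ⟨t, Finset.mem_erase.2 ⟨hne, ht⟩, htb⟩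
      · exact ⟨a, Finset.mem_erase.2 ⟨h, ha⟩, hab⟩
    have h1 := hmin _ hP
    have h2 := Finset.card_erase_lt_of_mem hs
    omega
  have hno : ∀ s ∈ S, ∀ s' ∈ S, ∀ s'' ∈ S, ∀ b ∈ B, fA s < fA s' → fA s' < fA s'' →
      G.Adj s b → G.Adj s'' b → False := by
    intro s hs s' hs' s'' hs'' b hb h1 h2 ha1 ha2
    obtain ⟨b', hb', hadj, huniq⟩ := hpriv s' hs'
    rcases lt_trichotomy (fB b') (fB b) with h | h | h
    · have := hstrong s (hSA s hs) s' (hSA s' hs') b' hb' b hb h1 h ha1 hadj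
      have := huniq s hs this.1
      subst this; omega
    · have := hfB hb' hb h
      subst this
      have := huniq s hs ha1
      subst this; omega
    · have := hstrong s' (hSA s' hs') s'' (hSA s'' hs'') b hb b' hb' h2 h hadj ha2
      have := huniq s'' hs'' this.2
      subst this; omega
  let r : V → ℕ := fun s => (S.filter (fun t => fA t < fA s)).card
  have hr : ∀ s ∈ S, ∀ s'' ∈ S, ∀ b ∈ B, fA s < fA s'' → G.Adj s b → G.Adj s'' b →
      r s'' = r s + 1 := by
    intro s hs s'' hs'' b hb hlt ha1 ha2
    have : S.filter (fun t => fA t < fA s'') = insert s (S.filter (fun t => fA t < fA s)) := by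
      ext t
      simp only [Finset.mem_filter, Finset.mem_insert]
      constructor
      · rintro ⟨ht, h⟩
        rcases lt_trichotomy (fA t) (fA s) with h' | h' | h'
        · exact Or.inr ⟨ht, h'⟩
        · exact Or.inl (hfA (hSA t ht) (hSA s hs) h')
        · exact (hno s hs t ht s'' hs'' b hb h' h ha1 ha2).elim
      · rintro (rfl | ⟨ht, h⟩)
        · exact ⟨hs, hlt⟩
        · exact ⟨ht, h.trans hlt⟩
    simp only [r]
    rw [this, Finset.card_insert_of_notMem (by simp)]
  refine ⟨fun v => if v ∈ S then r v % 2 + 1 else 0, ?_, ?_, ?_, ?_⟩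
  · intro v; dsimp only; split_ifs <;> omega
  · intro v h
    by_cases hv : v ∈ S
    · exact hSA v hv
    · simp [hv] at h
  · intro b hb
    obtain ⟨a, ha, hab⟩ := hSd b hb
    exact ⟨a, hSA a ha, hab, by simp [ha]⟩
  · intro b hb u w hu hw h0 he
    dsimp only at h0 he
    by_cases hus : u ∈ S
    · by_cases hws : w ∈ S
      · simp only [hus, hws, if_true] at he
        rcases lt_trichotomy (fA u) (fA w) with h | h | h
        · have := hr u hus w hws b hb h hu hw; omega
        · exact hfA (hSA u hus) (hSA w hws) h
        · have := hr w hws u hus b hb h hw hu; omega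
      · simp [hus, hws] at he
    · simp [hus] at h0

theorem stmt9 {V : Type*} [Fintype V] (G : SimpleGraph V) (hconn : G.Connected)
    (A B : Set V) (hA : A.Nonempty) (hB : B.Nonempty)
    (hpart : ∀ v : V, (v ∈ A ∧ v ∉ B) ∨ (v ∈ B ∧ v ∉ A))
    (hbip : ∀ u v : V, G.Adj u v → (u ∈ A ∧ v ∈ B) ∨ (u ∈ B ∧ v ∈ A))
    (fA fB : V → ℕ) (hfA : Set.InjOn fA A) (hfB : Set.InjOn fB B)
    (hstrong : ∀ a ∈ A, ∀ a' ∈ A, ∀ b ∈ B, ∀ b' ∈ B,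
      fA a < fA a' → fB b < fB b' → G.Adj a b' → G.Adj a' b →
      G.Adj a b ∧ G.Adj a' b') :
    sscNum G ≤ 4 := by
  have hne : ∃ x y : V, x ≠ y := by
    obtain ⟨a, ha⟩ := hA
    obtain ⟨b, hb⟩ := hB
    refine ⟨a, b, ?_⟩
    rintro rfl
    have := hpart a
    tauto
  have hnb : ∀ v, ∃ u, G.Adj v u := by
    intro v
    obtain ⟨x, y, hxy⟩ := hne
    haveI : Nontrivial V := ⟨x, y, hxy⟩
    exact hconn.preconnected.exists_adj_of_nontrivial v
  have hdA : ∀ b ∈ B, ∃ a ∈ A, G.Adj a b := by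
    intro b hb
    obtain ⟨u, hu⟩ := hnb b
    have h1 := hbip b u hu
    have h2 := hpart b
    exact ⟨u, by tauto, hu.symm⟩
  have hdB : ∀ a ∈ A, ∃ b ∈ B, G.Adj b a := by
    intro b hb
    obtain ⟨u, hu⟩ := hnb b
    have h1 := hbip b u hu
    have h2 := hpart b
    exact ⟨u, by tauto, hu.symm⟩
  obtain ⟨c, c2, cA, cd, cu⟩ := half_col G A B fA fB hfA hfB hdA hstrong
  obtain ⟨d, d2, dB, dd, du⟩ := half_col G B A fB fA hfB hfA hdB
    (fun b hb b' hb' a ha a' ha' h1 h2 h3 h4 => by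
      have := hstrong a ha a' ha' b hb b' hb' h2 h1 h4.symm h3.symm
      exact ⟨this.1.symm, this.2.symm⟩)
  have hcB : ∀ v ∈ B, c v = 0 := by
    intro v hv
    by_contra h
    have := cA v h
    have := hpart v
    tauto
  have hdA0 : ∀ v ∈ A, d v = 0 := by
    intro v hv
    by_contra h
    have := dB v h
    have := hpart v
    tauto
  apply Nat.sInf_le
  refine ⟨fun v => if d v = 0 then c v else d v + 2, ?_, ?_, ?_⟩
  · intro v
    have := c2 v
    have := d2 v
    dsimp only; split_ifs <;> omega
  · intro v
    rcases hpart v with ⟨hv, -⟩ | ⟨hv, -⟩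
    · obtain ⟨b, hb, hadj, h0⟩ := dd v hv
      exact ⟨b, Or.inr hadj.symm, by simp [h0]⟩
    · obtain ⟨a, ha, hadj, h0⟩ := cd v hv
      exact ⟨a, Or.inr hadj.symm, by simp [h0, hdA0 a ha]⟩
  · have key : ∀ v u, G.Adj v u → (if d v = 0 then c v else d v + 2) ≠ 0 →
        (if d v = 0 then c v else d v + 2) ≠ (if d u = 0 then c u else d u + 2) := by
      intro v u h h0
      have hv2 := c2 v
      have hu2 := c2 u
      rcases hbip v u h with ⟨h1, h2⟩ | ⟨h1, h2⟩
      · rw [hdA0 v h1] at h0 ⊢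
        rw [hcB u h2]
        simp only [if_true] at h0 ⊢
        split_ifs <;> omega
      · rw [hdA0 u h2]
        rw [hcB v h1] at h0 ⊢
        simp only [if_true] at h0 ⊢
        split_ifs at h0 ⊢ <;> omega
    intro v i hi hi4 u hu w hw hcu hcw
    dsimp only at hcu hcw
    rcases hu with rfl | hu <;> rcases hw with rfl | hw
    · rfl
    · exact (key _ _ hw (by omega) (by omega)).elim
    · exact (key _ _ hu (by omega) (by omega)).elim
    · have p1 := hbip v u hu
      have p2 := hbip v w hw
      rcases hpart v with ⟨hv, hv'⟩ | ⟨hv, hv'⟩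
      · have hub : u ∈ B := by tauto
        have hwb : w ∈ B := by tauto
        rw [hcB u hub] at hcu
        rw [hcB w hwb] at hcw
        apply du v hv u w hu.symm hw.symm
        · split_ifs at hcu <;> omega
        · split_ifs at hcu hcw <;> omega
      · have hub : u ∈ A := by tauto
        have hwb : w ∈ A := by tauto
        rw [hdA0 u hub] at hcu
        rw [hdA0 w hwb] at hcw
        simp only [if_true] at hcu hcw
        exact cu v hv u w hu.symm hw.symm (by omega) (by omega)
end

section
/- Let G be a finite tree (caterpillar) containing a path v_1, v_2, …, v_k such that every vertex of G either lies on this path or is adjacent to some vertex of the path. Then χ_ssc(G) ≤ 3. -/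
open SimpleGraph

theorem aux_le {V : Type*} (G : SimpleGraph V) (hacyc : G.IsAcyclic)
    {x y : V} (w : G.Walk x y) (hw : w.IsPath) (a b : ℕ) (hab : a ≤ b) (hb : b ≤ w.length)
    (u v : V) (hu : w.getVert a = u) (hv : w.getVert b = v) (q : G.Walk u v) :
    b - a ≤ q.length := by
  classical
  have h1 : (w.drop a).getVert (b - a) = v := by
    rw [Walk.drop_getVert, ← hv]
    congr 1
    omega
  subst hu
  subst h1
  have hp : ((w.drop a).take (b - a)).IsPath := (hw.drop a).take (b - a)
  have h2 := congrArg Subtype.val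
    ((hacyc.subsingleton_path _ _).elim ⟨(w.drop a).take (b - a), hp⟩ ⟨q.bypass, q.bypass_isPath⟩)
  have h3 : ((w.drop a).take (b - a)).length = b - a := by
    rw [Walk.take_length, Walk.drop_length]
    omega
  have h4 : q.bypass.length ≤ q.length := Walk.length_bypass_le_length q
  simp only at h2
  rw [h2] at h3
  omega

theorem aux_walk {V : Type*} (G : SimpleGraph V) (v u t : V) (hu : u ∈ closedNbhd G v)
    (ht : t ∈ closedNbhd G v) : ∃ q : G.Walk u t, q.length ≤ 2 := by
  rcases hu with rfl | hu <;> rcases ht with rfl | ht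
  · exact ⟨Walk.nil, by simp⟩
  · exact ⟨Walk.cons ht Walk.nil, by simp⟩
  · exact ⟨Walk.cons hu.symm Walk.nil, by simp⟩
  · exact ⟨Walk.cons hu.symm (Walk.cons ht Walk.nil), by simp⟩

theorem stmt10 {V : Type*} [Fintype V] (G : SimpleGraph V)
    (hconn : G.Connected) (hacyc : G.IsAcyclic)
    {x y : V} (w : G.Walk x y) (hw : w.IsPath)
    (hcov : ∀ u : V, u ∈ w.support ∨ ∃ z ∈ w.support, G.Adj z u) :
    sscNum G ≤ 3 := by
  classical
  apply Nat.sInf_le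
  have hex : ∀ v : V, ∃ n : ℕ, v ∈ w.support → w.getVert n = v ∧ n ≤ w.length := by
    intro v
    by_cases h : v ∈ w.support
    · obtain ⟨n, hn⟩ := Walk.mem_support_iff_exists_getVert.mp h
      exact ⟨n, fun _ => hn⟩
    · exact ⟨0, fun h' => absurd h' h⟩
  choose f hf using hex
  refine ⟨fun v => if v ∈ w.support then f v % 3 + 1 else 0, ?_, ?_, ?_⟩
  · intro v
    dsimp only
    split_ifs <;> omega
  · intro v
    rcases hcov v with h | ⟨z, hz, hadj⟩
    · exact ⟨v, Or.inl rfl, by simp [h]⟩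
    · exact ⟨z, Or.inr hadj.symm, by simp [hz]⟩
  · intro v i hi _ u hu t ht hcu hct
    dsimp only at hcu hct
    split_ifs at hcu hct with h1 h2 <;> try omega
    obtain ⟨a1, a2⟩ := hf u h1
    obtain ⟨b1, b2⟩ := hf t h2
    obtain ⟨q, hq⟩ := aux_walk G v u t hu ht
    have key : f u = f t := by
      rcases le_total (f u) (f t) with h | h
      · have := aux_le G hacyc w hw _ _ h b2 u t a1 b1 q
        omega
      · have := aux_le G hacyc w hw _ _ h a2 t u b1 a1 q.reverse
        rw [Walk.length_reverse] at this
        omega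
    rw [← a1, ← b1, key]
end

section
/- Three colours are sometimes necessary to subset square colour a caterpillar: let G be the tree obtained from a path v_1, v_2, …, v_k with k ≥ 3 by attaching, for each i, at least 3 pendant leaves to v_i (so each v_i has at least 3 neighbours of degree one). Then χ_ssc(G) ≥ 3, and combined with the upper bound for caterpillars, χ_ssc(G) = 3. -/
open SimpleGraph

theorem stmt11 {V : Type*} [Fintype V] [DecidableEq V] (G : SimpleGraph V)
    [DecidableRel G.Adj]
    (hconn : G.Connected) (hacyc : G.IsAcyclic)
    {x y : V} (w : G.Walk x y) (hw : w.IsPath) (hk : 2 ≤ w.length)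
    (hcov : ∀ u : V, u ∈ w.support ∨
      (G.degree u = 1 ∧ ∃ z ∈ w.support, G.Adj z u))
    (hleaf : ∀ z ∈ w.support,
      3 ≤ ((G.neighborFinset z).filter (fun u => G.degree u = 1)).card) :
    sscNum G = 3 := by
  classical
  have hdist : ∀ i, i ≤ w.length → G.dist x (w.getVert i) = i := by
    intro i hi
    obtain ⟨p, hp, hl⟩ := hconn.exists_path_of_dist x (w.getVert i)
    have h1 : (w.take i).IsPath := hw.take i
    have h2 := hacyc.path_unique ⟨p, hp⟩ ⟨w.take i, h1⟩
    have h3 : p = w.take i := congrArg Subtype.val h2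
    rw [← hl, h3, Walk.take_length]
    omega
  have hget : ∀ v ∈ w.support, w.getVert (G.dist x v) = v := by
    intro v hv
    obtain ⟨i, hi, hil⟩ := Walk.mem_support_iff_exists_getVert.1 hv
    rw [← hi, hdist i hil]
  have hnb : ∀ v u, u ∈ closedNbhd G v → G.dist u v ≤ 1 := by
    intro v u hu
    rcases hu with rfl | h
    · simp
    · exact (SimpleGraph.dist_eq_one_iff_adj.2 h.symm).le
  have hmem : (3 : ℕ) ∈ {q | ∃ c : V → ℕ, IsSubsetSquareColouring G q c} := by
    refine ⟨fun v => if v ∈ w.support then G.dist x v % 3 + 1 else 0, ?_, ?_, ?_⟩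
    · intro v
      dsimp only
      split_ifs <;> omega
    · intro v
      rcases hcov v with h | ⟨-, z, hz, hzv⟩
      · exact ⟨v, Or.inl rfl, by simp [h]⟩
      · exact ⟨z, Or.inr hzv.symm, by simp [hz]⟩
    · intro v i hi _ a ha b hb hca hcb
      dsimp only at hca hcb
      split_ifs at hca with h1 <;> split_ifs at hcb with h2 <;> try omega
      have e1 := hnb v a ha
      have e2 := hnb v b hb
      have t1 := hconn.dist_triangle (u := x) (v := a) (w := v)
      have t2 := hconn.dist_triangle (u := x) (v := v) (w := a)
      have t3 := hconn.dist_triangle (u := x) (v := b) (w := v)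
      have t4 := hconn.dist_triangle (u := x) (v := v) (w := b)
      rw [G.dist_comm (u := v) (v := a)] at t2
      rw [G.dist_comm (u := v) (v := b)] at t4
      have e : G.dist x a = G.dist x b := by omega
      rw [← hget a h1, ← hget b h2, e]
  apply le_antisymm
  · exact Nat.sInf_le hmem
  · apply le_csInf
    · exact ⟨3, hmem⟩
    · rintro q ⟨c, hq, hdom, hinj⟩
      by_contra hlt
      have hspine : ∀ z ∈ w.support, c z ≠ 0 := by
        intro z hz h0
        have hc : ((Finset.Icc 1 q)).card <
            ((G.neighborFinset z).filter (fun u => G.degree u = 1)).card := by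
          have := hleaf z hz
          simp only [Nat.card_Icc]
          omega
        obtain ⟨a, ha, b, hb, hab, hcab⟩ :=
          Finset.exists_ne_map_eq_of_card_lt_of_maps_to (f := c) hc (by
            intro u hu
            simp only [Finset.coe_filter, mem_neighborFinset, Set.mem_setOf_eq] at hu
            obtain ⟨hzu, hdeg⟩ := hu
            obtain ⟨t, ht, hct⟩ := hdom u
            have : c u ≠ 0 := by
              rcases ht with rfl | ht
              · exact hct
              · obtain ⟨s, hs⟩ := Finset.card_eq_one.1 hdeg
                have k1 : t ∈ G.neighborFinset u := by simpa using ht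
                have k2 : z ∈ G.neighborFinset u := by simpa using hzu.symm
                rw [hs, Finset.mem_singleton] at k1 k2
                subst k1
                subst k2
                exact absurd h0 hct
            have := hq u
            simp only [Finset.coe_Icc, Set.mem_Icc]
            omega)
        simp only [Finset.mem_filter, mem_neighborFinset] at ha hb
        have hca : 1 ≤ c a := by
          rcases Nat.eq_zero_or_pos (c a) with h | h
          · obtain ⟨t, ht, hct⟩ := hdom a
            rcases ht with rfl | ht
            · exact absurd h hct
            · obtain ⟨s, hs⟩ := Finset.card_eq_one.1 ha.2
              have k1 : t ∈ G.neighborFinset a := by simpa using ht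
              have k2 : z ∈ G.neighborFinset a := by simpa using ha.1.symm
              rw [hs, Finset.mem_singleton] at k1 k2
              subst k1
              subst k2
              exact absurd h0 hct
          · exact h
        exact hab (hinj z (c a) hca (hq a) a (Or.inr ha.1) b (Or.inr hb.1) rfl hcab.symm)
      have a01 := w.adj_getVert_succ (i := 0) (by omega)
      have a12 := w.adj_getVert_succ (i := 1) (by omega)
      have d0 := hdist 0 (by omega)
      have d1 := hdist 1 (by omega)
      have d2 := hdist 2 (by omega)
      have m0 : w.getVert 0 ∈ closedNbhd G (w.getVert 1) := Or.inr a01.symm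
      have m1 : w.getVert 1 ∈ closedNbhd G (w.getVert 1) := Or.inl rfl
      have m2 : w.getVert 2 ∈ closedNbhd G (w.getVert 1) := Or.inr a12
      have s0 := hspine _ (w.getVert_mem_support 0)
      have s1 := hspine _ (w.getVert_mem_support 1)
      have s2 := hspine _ (w.getVert_mem_support 2)
      have q0 := hq (w.getVert 0)
      have q1 := hq (w.getVert 1)
      have q2 := hq (w.getVert 2)
      have n01 : c (w.getVert 0) ≠ c (w.getVert 1) := fun h => by
        rw [hinj _ _ (by omega) q0 _ m0 _ m1 rfl h.symm] at d0
        omega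
      have n02 : c (w.getVert 0) ≠ c (w.getVert 2) := fun h => by
        rw [hinj _ _ (by omega) q0 _ m0 _ m2 rfl h.symm] at d0
        omega
      have n12 : c (w.getVert 1) ≠ c (w.getVert 2) := fun h => by
        rw [hinj _ _ (by omega) q1 _ m1 _ m2 rfl h.symm] at d1
        omega
      omega
end

section
/- Let G be the complete join of two finite simple graphs G₁ and G₂, each having at least one vertex, i.e. V(G) = V(G₁) ⊎ V(G₂) and E(G) = E(G₁) ∪ E(G₂) ∪ {uv : u ∈ V(G₁), v ∈ V(G₂)}. Then χ_ssc(G) ≤ 2. -/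
open SimpleGraph

/-- The complete join of two graphs: the disjoint union together with all edges between
the two vertex sets. -/
def completeJoin {V₁ V₂ : Type*} (G₁ : SimpleGraph V₁) (G₂ : SimpleGraph V₂) :
    SimpleGraph (V₁ ⊕ V₂) :=
  SimpleGraph.fromRel (fun x y =>
    (∃ a b, x = Sum.inl a ∧ y = Sum.inl b ∧ G₁.Adj a b) ∨
    (∃ a b, x = Sum.inr a ∧ y = Sum.inr b ∧ G₂.Adj a b) ∨
    (∃ a b, x = Sum.inl a ∧ y = Sum.inr b))

theorem stmt14 {V₁ V₂ : Type*} [Fintype V₁] [Fintype V₂]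
    [Nonempty V₁] [Nonempty V₂]
    (G₁ : SimpleGraph V₁) (G₂ : SimpleGraph V₂) :
    sscNum (completeJoin G₁ G₂) ≤ 2 := by
  classical
  obtain ⟨a⟩ := ‹Nonempty V₁›
  obtain ⟨b⟩ := ‹Nonempty V₂›
  apply Nat.sInf_le
  refine ⟨fun x => if x = Sum.inl a then 1 else if x = Sum.inr b then 2 else 0, ?_, ?_, ?_⟩
  · intro v
    dsimp only
    split_ifs <;> omega
  · rintro (v | v)
    · exact ⟨Sum.inr b, Or.inr (by simp [completeJoin]), by simp⟩
    · exact ⟨Sum.inl a, Or.inr (by simp [completeJoin]), by simp⟩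
  · intro v i h1 h2 u _ w _ hu hw
    dsimp only at hu hw
    split_ifs at hu hw <;> first | omega | simp_all
end

section
/- For all integers m, n ≥ 2, the complete bipartite graph K_{m,n} satisfies χ_ssc(K_{m,n}) = 2. -/
open SimpleGraph

theorem stmt16 (m n : ℕ) (hm : 2 ≤ m) (hn : 2 ≤ n) :
    sscNum (completeBipartiteGraph (Fin m) (Fin n)) = 2 := by
  have hm0 : 0 < m := by omega
  have hn0 : 0 < n := by omega
  have key : IsLeast {q | ∃ c : Fin m ⊕ Fin n → ℕ,
      IsSubsetSquareColouring (completeBipartiteGraph (Fin m) (Fin n)) q c} 2 := by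
    constructor
    · refine ⟨Sum.elim (fun a => if a = ⟨0, hm0⟩ then 1 else 0)
        (fun b => if b = ⟨0, hn0⟩ then 2 else 0), ?_, ?_, ?_⟩
      · rintro (a | b)
        · simp only [Sum.elim_inl]; split_ifs <;> omega
        · simp only [Sum.elim_inr]; split_ifs <;> omega
      · rintro (a | b)
        · exact ⟨Sum.inr ⟨0, hn0⟩, by simp [closedNbhd], by simp⟩
        · exact ⟨Sum.inl ⟨0, hm0⟩, by simp [closedNbhd], by simp⟩
      · intro v i hi _ u _ w _ hu hw
        rcases u with u | u <;> rcases w with w | w <;>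
          simp only [Sum.elim_inl, Sum.elim_inr] at hu hw <;>
          split_ifs at hu hw <;> first | omega | simp_all
    · rintro q ⟨c, h1, h2, h3⟩
      by_contra hq
      have common : ∀ u w : Fin m ⊕ Fin n, ∃ v,
          u ∈ closedNbhd (completeBipartiteGraph (Fin m) (Fin n)) v ∧
          w ∈ closedNbhd (completeBipartiteGraph (Fin m) (Fin n)) v := by
        rintro (u | u) (w | w)
        · exact ⟨Sum.inr ⟨0, hn0⟩, by simp [closedNbhd], by simp [closedNbhd]⟩
        · exact ⟨Sum.inl u, by simp [closedNbhd], by simp [closedNbhd]⟩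
        · exact ⟨Sum.inr u, by simp [closedNbhd], by simp [closedNbhd]⟩
        · exact ⟨Sum.inl ⟨0, hm0⟩, by simp [closedNbhd], by simp [closedNbhd]⟩
      have uniq : ∀ u w, c u ≠ 0 → c w ≠ 0 → u = w := by
        intro u w hu hw
        obtain ⟨v, hv1, hv2⟩ := common u w
        have := h1 u
        have := h1 w
        exact h3 v 1 le_rfl (by omega) u hv1 w hv2 (by omega) (by omega)
      obtain ⟨x, _, hx⟩ := h2 (Sum.inl ⟨0, hm0⟩)
      have dom : ∀ v, x ∈ closedNbhd (completeBipartiteGraph (Fin m) (Fin n)) v := by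
        intro v
        obtain ⟨u, hu, hc⟩ := h2 v
        rwa [uniq x u hx hc]
      rcases x with x | x
      · have a := dom (Sum.inl ⟨0, hm0⟩)
        have b := dom (Sum.inl ⟨1, hm⟩)
        simp [closedNbhd] at a b
        simp [a] at b
      · have a := dom (Sum.inr ⟨0, hn0⟩)
        have b := dom (Sum.inr ⟨1, hn⟩)
        simp [closedNbhd] at a b
        simp [a] at b
  exact key.csInf_eq
end

section
/- For every integer n ≥ 3, the cycle graph C_n on n vertices satisfies χ_ssc(C_n) = 1 if n is divisible by 3, and χ_ssc(C_n) = 2 otherwise. -/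
open SimpleGraph

lemma mem_nb (m : ℕ) (v u : Fin (m+3)) : u ∈ closedNbhd (cycleGraph (m+3)) v ↔
    u = v ∨ u = v + 1 ∨ u = v - 1 := by
  simp only [closedNbhd, Set.mem_ofPred_eq, cycleGraph_adj]
  refine or_congr Iff.rfl ?_
  rw [or_comm]
  refine or_congr ?_ ?_
  · rw [sub_eq_iff_eq_add, add_comm v 1]
  · constructor
    · intro h; rw [← h]; abel
    · intro h; rw [h]; abel

lemma val_add_one' (m : ℕ) (v : Fin (m+3)) :
    (v+1).val = if v.val = m+2 then 0 else v.val+1 := by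
  rw [Fin.val_add_one]
  simp [Fin.ext_iff]

lemma val_sub_one' (m : ℕ) (v : Fin (m+3)) :
    (v-1).val = if v.val = 0 then m+2 else v.val-1 := by
  have h := val_add_one' m (v-1)
  rw [sub_add_cancel] at h
  have := (v-1).isLt
  split_ifs at h ⊢ <;> omega

lemma mem_nb' (m : ℕ) (v u : Fin (m+3)) (h : u ∈ closedNbhd (cycleGraph (m+3)) v) :
    u.val = v.val ∨ u.val = (if v.val = m+2 then 0 else v.val+1) ∨
      u.val = (if v.val = 0 then m+2 else v.val-1) := by
  rw [mem_nb] at h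
  rw [← val_add_one', ← val_sub_one']
  simpa [Fin.ext_iff] using h

lemma upper (m : ℕ) : IsSubsetSquareColouring (cycleGraph (m+3)) (if 3 ∣ m+3 then 1 else 2)
    (fun i => if i.val % 3 = 0 then (if m ≤ i.val ∧ ¬ 3 ∣ m+3 then 2 else 1) else 0) := by
  refine ⟨?_, ?_, ?_⟩
  · intro v; dsimp only; split_ifs <;> omega
  · intro v
    have hv := v.isLt
    have h1 := val_add_one' m v
    have h2 := val_sub_one' m v
    have key : v.val % 3 = 0 ∨ (v+1).val % 3 = 0 ∨ (v-1).val % 3 = 0 := by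
      split_ifs at h1 h2 <;> omega
    rcases key with h | h | h
    · exact ⟨v, (mem_nb _ _ _).2 (by simp), by simp only [h, if_true]; split_ifs <;> omega⟩
    · exact ⟨v+1, (mem_nb _ _ _).2 (by simp), by simp only [h, if_true]; split_ifs <;> omega⟩
    · exact ⟨v-1, (mem_nb _ _ _).2 (by simp), by simp only [h, if_true]; split_ifs <;> omega⟩
  · intro v i hi _ u hu w hw hcu hcw
    have hu' := mem_nb' _ _ _ hu
    have hw' := mem_nb' _ _ _ hw
    have := v.isLt
    have := u.isLt
    have := w.isLt
    dsimp only at hcu hcw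
    apply Fin.ext
    have a : u.val % 3 = 0 := by by_contra h; simp [h] at hcu; omega
    have b : w.val % 3 = 0 := by by_contra h; simp [h] at hcw; omega
    simp only [a, b, if_true] at hcu hcw
    split_ifs at hcu hcw hu' hw' <;> omega

lemma lower (m q : ℕ) (c : Fin (m+3) → ℕ)
    (h : IsSubsetSquareColouring (cycleGraph (m+3)) q c) :
    (if 3 ∣ m+3 then 1 else 2) ≤ q := by
  obtain ⟨h1, h2, h3⟩ := h
  have q1 : 1 ≤ q := by
    obtain ⟨u, _, hu⟩ := h2 0
    have := h1 u
    omega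
  split_ifs with hd
  · exact q1
  by_contra hq
  obtain rfl : q = 1 := by omega
  apply hd
  have key : ∀ v, c v + c (v+1) + c (v-1) = 1 := by
    intro v
    have e1 := val_add_one' m v
    have e2 := val_sub_one' m v
    have hv := v.isLt
    have a := h1 v
    have b := h1 (v+1)
    have d := h1 (v-1)
    have m0 : v ∈ closedNbhd (cycleGraph (m+3)) v := (mem_nb _ _ _).2 (by simp)
    have m1 : v+1 ∈ closedNbhd (cycleGraph (m+3)) v := (mem_nb _ _ _).2 (by simp)
    have m2 : v-1 ∈ closedNbhd (cycleGraph (m+3)) v := (mem_nb _ _ _).2 (by simp)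
    have x : ¬ (c v = 1 ∧ c (v+1) = 1) := fun ⟨p, r⟩ => by
      have := congrArg Fin.val (h3 v 1 le_rfl le_rfl _ m0 _ m1 p r)
      split_ifs at e1 e2 <;> omega
    have y : ¬ (c v = 1 ∧ c (v-1) = 1) := fun ⟨p, r⟩ => by
      have := congrArg Fin.val (h3 v 1 le_rfl le_rfl _ m0 _ m2 p r)
      split_ifs at e1 e2 <;> omega
    have z : ¬ (c (v+1) = 1 ∧ c (v-1) = 1) := fun ⟨p, r⟩ => by
      have := congrArg Fin.val (h3 v 1 le_rfl le_rfl _ m1 _ m2 p r)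
      split_ifs at e1 e2 <;> omega
    obtain ⟨u, hu, hc⟩ := h2 v
    rw [mem_nb] at hu
    rcases hu with rfl | rfl | rfl <;> omega
  have s : ∑ v, (c v + c (v+1) + c (v-1)) = m+3 := by simp [key]
  rw [Finset.sum_add_distrib, Finset.sum_add_distrib] at s
  have s1 : ∑ v, c (v+1) = ∑ v, c v := Equiv.sum_comp (Equiv.addRight (1 : Fin (m+3))) c
  have s2 : ∑ v, c (v-1) = ∑ v, c v := Equiv.sum_comp (Equiv.subRight (1 : Fin (m+3))) c
  omega

theorem stmt18 (n : ℕ) (hn : 3 ≤ n) :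
    sscNum (cycleGraph n) = if 3 ∣ n then 1 else 2 := by
  obtain ⟨m, rfl⟩ : ∃ m, n = m + 3 := ⟨n - 3, by omega⟩
  apply le_antisymm
  · exact Nat.sInf_le ⟨_, upper m⟩
  · obtain ⟨c, hc⟩ := Nat.sInf_mem (s := {q | ∃ c, IsSubsetSquareColouring (cycleGraph (m+3)) q c})
      ⟨_, _, upper m⟩
    exact lower m _ c hc
end
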